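/- Let G be a finite group, E an Archimedean Riesz space, ρ : G → Aut⁺(E) a positive representation, and B' ⊆ E a nonzero principal band. Then there exists a nonzero principal band B ⊆ B' such that for every t ∈ G, either B ∩ ρ_t(B) = {0} or ρ_t(B) = B. -/

import Mathlib

/-- A (Riesz) ideal of an ordered real vector space: a submodule `I` such that
`|x| ≤ |y|` and `y ∈ I` imply `x ∈ I`. -/
def IsRieszIdeal {E : Type*} [AddCommGroup E] [Lattice E] [Module ℝ E]
    (I : Submodule ℝ E) : Prop :=
  ∀ x y : E, |x| ≤ |y| → y ∈ I → x ∈ I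

/-- A band: an ideal closed under suprema of its subsets (when they exist in `E`). -/
def IsBand {E : Type*} [AddCommGroup E] [Lattice E] [Module ℝ E]
    (B : Submodule ℝ E) : Prop :=
  IsRieszIdeal B ∧ ∀ (D : Set E) (x : E), D ⊆ (B : Set E) → IsLUB D x → x ∈ B

/-- The disjoint complement of a set `D`. -/
def disjComplement {E : Type*} [AddCommGroup E] [Lattice E] (D : Set E) : Set E :=
  {x : E | ∀ y ∈ D, |x| ⊓ |y| = 0}

/-- A projection band: a band `B` with `E = B ⊕ Bᵈ`. -/
def IsProjectionBand {E : Type*} [AddCommGroup E] [Lattice E] [Module ℝ E]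
    (B : Submodule ℝ E) : Prop :=
  IsBand B ∧ ∀ x : E, ∃ y ∈ B, ∃ z ∈ disjComplement (B : Set E), x = y + z

/-- An order direct sum decomposition `E = L ⊕ M`: every element decomposes uniquely
as a sum of an element of `L` and an element of `M`, and an element is positive iff
both its components are positive. -/
def IsOrderDecomposition {E : Type*} [AddCommGroup E] [Lattice E] [Module ℝ E]
    (L M : Submodule ℝ E) : Prop :=
  (∀ x : E, ∃ y ∈ L, ∃ z ∈ M, x = y + z) ∧
  (∀ x : E, x ∈ L → x ∈ M → x = 0) ∧
  (∀ y z : E, y ∈ L → z ∈ M → (0 ≤ y + z ↔ 0 ≤ y ∧ 0 ≤ z))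

/-- A homomorphism `ρ : G →* (E ≃ₗ[ℝ] E)` is a positive representation when each
`ρ s` is an order isomorphism (hence a lattice automorphism). -/
def IsPositiveRep {E : Type*} [AddCommGroup E] [Lattice E] [Module ℝ E]
    {G : Type*} [Group G] (ρ : G →* (E ≃ₗ[ℝ] E)) : Prop :=
  ∀ (s : G) (x y : E), x ≤ y ↔ ρ s x ≤ ρ s y

/-- A submodule is `ρ`-invariant if it is mapped into itself by every `ρ s`. -/
def InvariantSubmodule {E : Type*} [AddCommGroup E] [Lattice E] [Module ℝ E]
    {G : Type*} [Group G] (ρ : G →* (E ≃ₗ[ℝ] E)) (B : Submodule ℝ E) : Prop :=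
  ∀ (s : G), ∀ x ∈ B, ρ s x ∈ B

/-- `ρ` is order indecomposable if the only `ρ`-invariant order direct sum
decompositions `E = L ⊕ M` are the trivial ones. -/
def OrderIndecomposable {E : Type*} [AddCommGroup E] [Lattice E] [Module ℝ E]
    {G : Type*} [Group G] (ρ : G →* (E ≃ₗ[ℝ] E)) : Prop :=
  ∀ L M : Submodule ℝ E, IsOrderDecomposition L M →
    InvariantSubmodule ρ L → InvariantSubmodule ρ M → L = ⊥ ∨ L = ⊤

/-- `ρ` is projection band irreducible if the only `ρ`-invariant projection bands
are `{0}` and `E`. -/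
def ProjectionBandIrreducible {E : Type*} [AddCommGroup E] [Lattice E] [Module ℝ E]
    {G : Type*} [Group G] (ρ : G →* (E ≃ₗ[ℝ] E)) : Prop :=
  ∀ B : Submodule ℝ E, IsProjectionBand B → InvariantSubmodule ρ B → B = ⊥ ∨ B = ⊤


/-- A principal band: the band generated by a single element, i.e. the smallest band
containing some element `x`. -/
def IsPrincipalBand {E : Type*} [AddCommGroup E] [Lattice E] [Module ℝ E]
    (B : Submodule ℝ E) : Prop :=
  IsBand B ∧ ∃ x ∈ B, ∀ C : Submodule ℝ E, IsBand C → x ∈ C → B ≤ C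

/-- `E` is Archimedean: if `0 ≤ n • x ≤ y` for all positive integers `n`, then `x = 0`. -/
def RieszArchimedean (E : Type*) [AddCommGroup E] [Lattice E] [Module ℝ E] : Prop :=
  ∀ x y : E, (∀ n : ℕ, 0 < n → 0 ≤ n • x ∧ n • x ≤ y) → x = 0

/-!
Let `a` be a nonzero element of `B'` with finite orbit. The meets of translates of `|a|` form a
finite `G`-invariant set which is closed under meets, so it contains a minimal strictly positive
element `x ≤ |a|`. For each `t`, minimality forces `x ⊓ ρ t x = 0` or `x ≤ ρ t x`; combining this
with the same alternative for `t⁻¹` gives `x ⊓ ρ t x = 0` or `ρ t x = x`. The band generated by `x`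
inherits this dichotomy, because lattice automorphisms commute with generating bands and disjoint
elements generate disjoint bands.
-/

section OrderAutomorphisms

variable {G α : Type*} [Group G] [SemilatticeInf α]

theorem exists_inf_map_eq_or_map_eq_of_infClosed (φ : G →* (α ≃o α)) {F : Set α} (hF : F.Finite)
    (hinf : InfClosed F) (hmap : ∀ t, ∀ y ∈ F, φ t y ∈ F) {o a : α} (ho : ∀ t, φ t o = o)
    (ha : a ∈ F) (hoa : o < a) :
    ∃ x ≤ a, o < x ∧ ∀ t, x ⊓ φ t x = o ∨ φ t x = x := by
  obtain ⟨x, hxa, ⟨hxF, hox⟩, hmin⟩ :=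
    (hF.subset (Set.sep_subset F (o < ·))).exists_le_minimal ⟨ha, hoa⟩
  have inf_eq_or_le (t : G) : x ⊓ φ t x = o ∨ x ≤ φ t x := by
    have hle : o ≤ x ⊓ φ t x := le_inf hox.le (ho t ▸ (φ t).monotone hox.le)
    refine hle.eq_or_lt.imp Eq.symm fun hlt ↦ ?_
    exact (hmin ⟨hinf hxF (hmap t x hxF), hlt⟩ inf_le_left).trans inf_le_right
  have map_inv_map (t : G) : φ t (φ t⁻¹ x) = x := by
    rw [← RelIso.mul_apply, ← map_mul, mul_inv_cancel, map_one, RelIso.one_apply]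
  refine ⟨x, hxa, hox, fun t ↦ ?_⟩
  rcases inf_eq_or_le t, inf_eq_or_le t⁻¹ with ⟨h | hle, h' | hle'⟩
  · exact .inl h
  · exact .inl h
  · left
    rw [inf_comm, ← ho t, ← h', map_inf, map_inv_map]
  · exact .inr (le_antisymm (((φ t).monotone hle').trans_eq (map_inv_map t)) hle)

theorem exists_inf_map_eq_or_map_eq (φ : G →* (α ≃o α)) {o a : α} (ho : ∀ t, φ t o = o)
    (hoa : o < a) (horbit : (Set.range fun t ↦ φ t a).Finite) :
    ∃ x ≤ a, o < x ∧ ∀ t, x ⊓ φ t x = o ∨ φ t x = x := by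
  have horbit_map (t : G) : (Set.range fun s ↦ φ s a) ⊆ φ t ⁻¹' infClosure (.range (φ · a)) := by
    rintro _ ⟨s, rfl⟩
    exact subset_infClosure ⟨t * s, by simp only [map_mul, RelIso.mul_apply]⟩
  exact exists_inf_map_eq_or_map_eq_of_infClosed φ horbit.infClosure infClosed_infClosure
    (fun t ↦ infClosure_min (horbit_map t) (infClosed_infClosure.preimage (φ t))) ho
    (subset_infClosure ⟨1, by simp only [map_one, RelIso.one_apply]⟩) hoa

end OrderAutomorphisms

theorem abs_smul_le_abs_smul_abs {R E : Type*} [Ring R] [LinearOrder R] [IsOrderedRing R]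
    [AddCommGroup E] [Lattice E] [Module R E] [PosSMulMono R E] (r : R) (x : E) :
    |r • x| ≤ |r| • |x| := by
  have smul_le_abs (s : R) (hs : 0 ≤ s) : |s • x| ≤ s • |x| :=
    abs_le'.mpr ⟨smul_le_smul_of_nonneg_left (le_abs_self x) hs,
      smul_neg s x ▸ smul_le_smul_of_nonneg_left (neg_le_abs x) hs⟩
  rcases le_total 0 r with hr | hr
  · rw [abs_of_nonneg hr]
    exact smul_le_abs r hr
  · rw [abs_of_nonpos hr, ← abs_neg (r • x), ← neg_smul]
    exact smul_le_abs (-r) (neg_nonneg.mpr hr)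

section LatticeOrderedGroup

variable {E : Type*} [AddCommGroup E] [Lattice E] [IsOrderedAddMonoid E]

theorem abs_pos_of_ne_zero {x : E} (hx : x ≠ 0) : 0 < |x| := by
  refine (abs_nonneg x).lt_of_ne' fun h ↦ hx ?_
  exact le_antisymm (h ▸ le_abs_self x) (neg_nonpos.mp (h ▸ neg_le_abs x))

theorem add_inf_le_inf_add_inf {p q c : E} (hp : 0 ≤ p) (hq : 0 ≤ q) (hc : 0 ≤ c) :
    (p + q) ⊓ c ≤ p ⊓ c + q ⊓ c := by
  rw [inf_add, add_inf, add_inf]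
  exact le_inf (inf_le_inf_left _ (le_add_of_nonneg_left hp))
    (inf_le_right.trans (le_inf (le_add_of_nonneg_right hq) (le_add_of_nonneg_right hc)))

theorem posPart_inf_eq_zero_of_isLUB {D : Set E} {x c : E} (hx : IsLUB D x) (hc : 0 ≤ c)
    (hD : ∀ d ∈ D, d⁺ ⊓ c = 0) : x⁺ ⊓ c = 0 := by
  set w := x⁺ ⊓ c
  have hw : 0 ≤ w := le_inf (posPart_nonneg x) hc
  have hxw : x ≤ x⁺ - w := hx.2 fun d hd ↦ by
    have hdw : d⁺ ⊓ w = 0 := le_antisymm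
      ((inf_le_inf_left _ inf_le_right).trans (hD d hd).le) (le_inf (posPart_nonneg d) hw)
    rw [le_sub_iff_add_le]
    calc d + w ≤ d⁺ + w := by gcongr; exact le_posPart d
      _ = d⁺ ⊔ w := by rw [← inf_add_sup, hdw, zero_add]
      _ ≤ x⁺ := sup_le (posPart_mono (hx.1 hd)) inf_le_left
  have hposPart : x⁺ ≤ x⁺ - w := sup_le hxw (sub_nonneg.mpr inf_le_left)
  exact le_antisymm ((le_sub_self_iff _).mp hposPart) hw

theorem mem_disjComplement_iff_le {D : Set E} {x : E} :
    x ∈ disjComplement D ↔ ∀ y ∈ D, |x| ⊓ |y| ≤ 0 :=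
  forall₂_congr fun _ _ ↦ (le_inf (abs_nonneg _) (abs_nonneg _)).ge_iff_eq'.symm

theorem add_mem_disjComplement {D : Set E} {a b : E} (ha : a ∈ disjComplement D)
    (hb : b ∈ disjComplement D) : a + b ∈ disjComplement D :=
  mem_disjComplement_iff_le.mpr fun y hy ↦
    calc |a + b| ⊓ |y| ≤ (|a| + |b|) ⊓ |y| := inf_le_inf_right _ (abs_add_le a b)
      _ ≤ |a| ⊓ |y| + |b| ⊓ |y| :=
        add_inf_le_inf_add_inf (abs_nonneg a) (abs_nonneg b) (abs_nonneg y)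
      _ = 0 := by rw [ha y hy, hb y hy, add_zero]

theorem smul_mem_disjComplement {𝕜 : Type*} [Field 𝕜] [LinearOrder 𝕜] [IsStrictOrderedRing 𝕜]
    [Module 𝕜 E] [PosSMulMono 𝕜 E] {D : Set E} {x : E} (r : 𝕜) (hx : x ∈ disjComplement D) :
    r • x ∈ disjComplement D := by
  refine mem_disjComplement_iff_le.mpr fun y hy ↦ ?_
  set c := max |r| 1
  have hc : 0 < c := zero_lt_one.trans_le (le_max_right _ _)
  calc |r • x| ⊓ |y| ≤ (c • |x|) ⊓ (c • |y|) := by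
        refine inf_le_inf ((abs_smul_le_abs_smul_abs r x).trans ?_) ?_
        · exact smul_le_smul_of_nonneg_right (le_max_left _ _) (abs_nonneg x)
        · exact le_smul_of_one_le_left (abs_nonneg y) (le_max_right _ _)
    _ = c • (|x| ⊓ |y|) := ((OrderIso.smulRight hc).map_inf |x| |y|).symm
    _ = 0 := by rw [hx y hy, smul_zero]

theorem mem_disjComplement_of_isLUB {D S : Set E} {x : E} (hS : S ⊆ disjComplement D)
    (hx : IsLUB S x) : x ∈ disjComplement D := by
  refine mem_disjComplement_iff_le.mpr fun y hy ↦ ?_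
  have hpos : x⁺ ⊓ |y| = 0 := posPart_inf_eq_zero_of_isLUB hx (abs_nonneg y) fun d hd ↦
    le_antisymm ((inf_le_inf_right _ (sup_le (le_abs_self d) (abs_nonneg d))).trans (hS hd y hy).le)
      (le_inf (posPart_nonneg d) (abs_nonneg y))
  have hneg : x⁻ ⊓ |y| ≤ 0 := by
    rcases S.eq_empty_or_nonempty with rfl | ⟨d, hd⟩
    · have hx0 : 0 ≤ x := by simpa using isLUB_empty_iff.mp hx (x + x)
      rw [negPart_eq_zero.mpr hx0]
      exact inf_le_left
    · have hle : x⁻ ≤ |d| := (negPart_anti (hx.1 hd)).trans (sup_le (neg_le_abs d) (abs_nonneg d))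
      exact (inf_le_inf_right _ hle).trans (hS hd y hy).le
  calc |x| ⊓ |y| = (x⁺ + x⁻) ⊓ |y| := by rw [posPart_add_negPart]
    _ ≤ x⁺ ⊓ |y| + x⁻ ⊓ |y| :=
      add_inf_le_inf_add_inf (posPart_nonneg x) (negPart_nonneg x) (abs_nonneg y)
    _ ≤ 0 := add_nonpos hpos.le hneg

end LatticeOrderedGroup

section DisjointComplement

variable {E : Type*} [AddCommGroup E] [Lattice E] [IsOrderedAddMonoid E] [Module ℝ E]
  [PosSMulMono ℝ E]

/-- The disjoint complement `Dᵈ` of a set `D`, bundled as a subspace. -/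
def disjComplementSubmodule (D : Set E) : Submodule ℝ E where
  carrier := disjComplement D
  zero_mem' := mem_disjComplement_iff_le.mpr fun _ _ ↦ inf_le_left.trans abs_zero.le
  add_mem' := add_mem_disjComplement
  smul_mem' := fun r _ ↦ smul_mem_disjComplement r

theorem isBand_disjComplementSubmodule (D : Set E) : IsBand (disjComplementSubmodule D) :=
  ⟨fun _ _ hxz hz ↦ mem_disjComplement_iff_le.mpr fun y hy ↦
    (inf_le_inf_right _ hxz).trans (hz y hy).le, fun _ _ ↦ mem_disjComplement_of_isLUB⟩

end DisjointComplement

section BandSpan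

variable {E : Type*} [AddCommGroup E] [Lattice E] [Module ℝ E]

theorem isBand_sInf {S : Set (Submodule ℝ E)} (hS : ∀ C ∈ S, IsBand C) : IsBand (sInf S) := by
  refine ⟨fun x y hxy hy ↦ Submodule.mem_sInf.mpr fun C hC ↦ ?_,
    fun D x hD hx ↦ Submodule.mem_sInf.mpr fun C hC ↦ ?_⟩
  · exact (hS C hC).1 x y hxy (Submodule.mem_sInf.mp hy C hC)
  · exact (hS C hC).2 D x (fun d hd ↦ Submodule.mem_sInf.mp (hD hd) C hC) hx

/-- The band generated by a set `D`, as the intersection of all bands containing `D`. -/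
def bandSpan (D : Set E) : Submodule ℝ E := sInf {C | IsBand C ∧ D ⊆ C}

theorem isBand_bandSpan (D : Set E) : IsBand (bandSpan D) := isBand_sInf fun _ hC ↦ hC.1

theorem subset_bandSpan (D : Set E) : D ⊆ bandSpan D := fun _ hx ↦
  Submodule.mem_sInf.mpr fun _ hC ↦ hC.2 hx

theorem bandSpan_le {D : Set E} {C : Submodule ℝ E} (hC : IsBand C) (hD : D ⊆ C) :
    bandSpan D ≤ C :=
  sInf_le ⟨hC, hD⟩

theorem mem_bandSpan_singleton (x : E) : x ∈ bandSpan {x} := subset_bandSpan {x} rfl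

theorem isPrincipalBand_bandSpan_singleton (x : E) : IsPrincipalBand (bandSpan {x}) :=
  ⟨isBand_bandSpan {x}, x, mem_bandSpan_singleton x,
    fun _ hC hx ↦ bandSpan_le hC (Set.singleton_subset_iff.mpr hx)⟩

theorem bandSpan_inf_bandSpan_eq_bot [IsOrderedAddMonoid E] [PosSMulMono ℝ E] {C D : Set E}
    (h : C ⊆ disjComplement D) : bandSpan C ⊓ bandSpan D = ⊥ := by
  refine (Submodule.eq_bot_iff _).mpr fun z ⟨hzC, hzD⟩ ↦ ?_
  have hz : z ∈ disjComplement D := bandSpan_le (isBand_disjComplementSubmodule D) h hzC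
  have hD : D ⊆ disjComplement {z} := by
    rintro y hy _ rfl
    rw [inf_comm]
    exact hz y hy
  have hzz : |z| ⊓ |z| = 0 := bandSpan_le (isBand_disjComplementSubmodule {z}) hD hzD z rfl
  by_contra hne
  exact (abs_pos_of_ne_zero hne).ne' (inf_idem |z| ▸ hzz)

end BandSpan

section LatticeIsomorphism

variable {E F : Type*} [AddCommGroup E] [Lattice E] [Module ℝ E] [AddCommGroup F] [Lattice F]
  [Module ℝ F] {f : E ≃ₗ[ℝ] F}

theorem map_abs_of_le_iff_le (hf : ∀ x y, x ≤ y ↔ f x ≤ f y) (x : E) : f |x| = |f x| := by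
  let e : E ≃o F := ⟨f.toEquiv, (hf _ _).symm⟩
  calc f |x| = f x ⊔ f (-x) := e.map_sup x (-x)
    _ = |f x| := by rw [map_neg, abs]

theorem isBand_comap (hf : ∀ x y, x ≤ y ↔ f x ≤ f y) {C : Submodule ℝ F} (hC : IsBand C) :
    IsBand (C.comap f.toLinearMap) := by
  let e : E ≃o F := ⟨f.toEquiv, (hf _ _).symm⟩
  refine ⟨fun x y hxy hy ↦ hC.1 (f x) (f y) ?_ hy, fun D x hD hx ↦ ?_⟩
  · rw [← map_abs_of_le_iff_le hf, ← map_abs_of_le_iff_le hf]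
    exact (hf _ _).mp hxy
  · exact hC.2 (e '' D) (e x) (Set.image_subset_iff.mpr hD) (e.isLUB_image'.mpr hx)

theorem map_bandSpan (hf : ∀ x y, x ≤ y ↔ f x ≤ f y) (D : Set E) :
    (bandSpan D).map f.toLinearMap = bandSpan (f '' D) := by
  have hf_symm (x y : F) : x ≤ y ↔ f.symm x ≤ f.symm y := by simp [hf (f.symm x)]
  apply le_antisymm
  · rw [Submodule.map_le_iff_le_comap]
    exact bandSpan_le (isBand_comap hf (isBand_bandSpan _)) fun x hx ↦
      subset_bandSpan (f '' D) (Set.mem_image_of_mem f hx)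
  · refine bandSpan_le ?_ (Set.image_mono (subset_bandSpan D))
    rw [Submodule.map_equiv_eq_comap_symm]
    exact isBand_comap hf_symm (isBand_bandSpan D)

/-- A positive representation, viewed as an action by order automorphisms. -/
def IsPositiveRep.toOrderAut {G : Type*} [Group G] {ρ : G →* (E ≃ₗ[ℝ] E)}
    (hρ : IsPositiveRep ρ) : G →* (E ≃o E) where
  toFun t := ⟨(ρ t).toEquiv, (hρ t _ _).symm⟩
  map_one' := by ext; simp
  map_mul' s t := by ext; simp

end LatticeIsomorphism

theorem stmt6_general {G E : Type*} [Group G] [AddCommGroup E] [Lattice E] [Module ℝ E]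
    (hadd : ∀ x y z : E, x ≤ y → x + z ≤ y + z)
    (hsmul : ∀ (c : ℝ) (x : E), 0 ≤ c → 0 ≤ x → 0 ≤ c • x)
    (ρ : G →* (E ≃ₗ[ℝ] E)) (hρ : IsPositiveRep ρ) {B' : Submodule ℝ E} (hB' : IsBand B')
    {a : E} (haB' : a ∈ B') (ha : a ≠ 0) (horbit : (Set.range fun t ↦ ρ t a).Finite) :
    ∃ B : Submodule ℝ E, IsPrincipalBand B ∧ B ≠ ⊥ ∧ B ≤ B' ∧
      ∀ t : G, B ⊓ B.map (ρ t).toLinearMap = ⊥ ∨ B.map (ρ t).toLinearMap = B := by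
  have : IsOrderedAddMonoid E := { add_le_add_left := fun x y hxy z ↦ hadd x y z hxy }
  have : PosSMulMono ℝ E := .of_smul_nonneg fun c hc x ↦ hsmul c x hc
  have horbit_abs : (Set.range fun t ↦ hρ.toOrderAut t |a|).Finite := by
    refine (horbit.image abs).subset ?_
    rintro _ ⟨t, rfl⟩
    exact ⟨ρ t a, ⟨t, rfl⟩, (map_abs_of_le_iff_le (hρ t) a).symm⟩
  obtain ⟨x, hxa, hx0, hx⟩ := exists_inf_map_eq_or_map_eq hρ.toOrderAut
    (fun t ↦ map_zero (ρ t)) (abs_pos_of_ne_zero ha) horbit_abs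
  have hxB' : x ∈ B' := hB'.1 x a (by rwa [abs_of_nonneg hx0.le]) haB'
  refine ⟨bandSpan {x}, isPrincipalBand_bandSpan_singleton x,
    (Submodule.ne_bot_iff _).mpr ⟨x, mem_bandSpan_singleton x, hx0.ne'⟩,
    bandSpan_le hB' (Set.singleton_subset_iff.mpr hxB'), fun t ↦ ?_⟩
  rw [map_bandSpan (hρ t), Set.image_singleton]
  refine (hx t).imp (fun hdisj ↦ bandSpan_inf_bandSpan_eq_bot ?_) fun hfix ↦ ?_
  · have htx : 0 ≤ ρ t x := map_zero (ρ t) ▸ (hρ t 0 x).mp hx0.le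
    rintro _ rfl _ rfl
    rwa [abs_of_nonneg hx0.le, abs_of_nonneg htx]
  · exact congrArg (fun y ↦ bandSpan {y}) hfix

/-- Given a positive representation `ρ` of a finite group `G` in an Archimedean Riesz
space `E` and a nonzero principal band `B' ⊆ E`, there is a nonzero principal band
`B ⊆ B'` such that for every `t ∈ G` either `B ∩ ρ_t(B) = {0}` or `ρ_t(B) = B`. -/
theorem stmt6 {G E : Type*} [Group G] [Finite G] [AddCommGroup E] [Lattice E] [Module ℝ E]
    (hadd : ∀ x y z : E, x ≤ y → x + z ≤ y + z)
    (hsmul : ∀ (c : ℝ) (x : E), 0 ≤ c → 0 ≤ x → 0 ≤ c • x)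
    (harch : RieszArchimedean E)
    (ρ : G →* (E ≃ₗ[ℝ] E)) (hρ : IsPositiveRep ρ)
    (B' : Submodule ℝ E) (hB' : IsPrincipalBand B') (hB'0 : B' ≠ ⊥) :
    ∃ B : Submodule ℝ E, IsPrincipalBand B ∧ B ≠ ⊥ ∧ B ≤ B' ∧
      ∀ t : G, B ⊓ B.map (ρ t).toLinearMap = ⊥ ∨ B.map (ρ t).toLinearMap = B := by
  obtain ⟨a, haB', ha⟩ := Submodule.exists_mem_ne_zero_of_ne_bot hB'0
  exact stmt6_general hadd hsmul ρ hρ hB'.1 haB' ha (Set.finite_range _)
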